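/- Let G be a finite simple graph with every vertex of degree at least 1, with adjacency matrix A and diagonal degree matrix D, and let Ã = D^{-1/2} A D^{-1/2} be the symmetrically normalized adjacency matrix. Let W be an H×H real matrix with ‖W‖₂ < 1, V an F×H real matrix, and X an N×F real matrix (where N = |V(G)|). Then the reservoir map Φ(M) = tanh(Ã M W + X V) is a contraction with constant K = ρ(Ã)·‖W‖₂ < 1, and hence it has a unique fixed point in ℝ^{N×H}. -/

import Mathlib

noncomputable def frobNorm {m n : Type*} [Fintype m] [Fintype n]
    (M : Matrix m n ℝ) : ℝ :=
  Real.sqrt (∑ i, ∑ j, (M i j) ^ 2)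

noncomputable def specNorm {m n : ℕ} (M : Matrix (Fin m) (Fin n) ℝ) : ℝ :=
  ‖LinearMap.toContinuousLinearMap (Matrix.toEuclideanLin M)‖

noncomputable def specRad {n : ℕ} (A : Matrix (Fin n) (Fin n) ℝ)
    (hA : A.IsHermitian) : ℝ :=
  ⨆ i, |hA.eigenvalues i|

noncomputable def mtanh {m n : Type*} (M : Matrix m n ℝ) : Matrix m n ℝ :=
  Matrix.of fun i j => Real.tanh (M i j)

noncomputable def resMap {N F Hd : ℕ} (Atil : Matrix (Fin N) (Fin N) ℝ)
    (W : Matrix (Fin Hd) (Fin Hd) ℝ) (V : Matrix (Fin F) (Fin Hd) ℝ)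
    (X : Matrix (Fin N) (Fin F) ℝ) (M : Matrix (Fin N) (Fin Hd) ℝ) :
    Matrix (Fin N) (Fin Hd) ℝ :=
  mtanh (Atil * M * W + X * V)

/-- The symmetrically normalized adjacency matrix D^{-1/2} A D^{-1/2} of a
finite simple graph with minimum degree ≥ 1. -/
noncomputable def normAdj {N : ℕ} (G : SimpleGraph (Fin N)) [DecidableRel G.Adj] :
    Matrix (Fin N) (Fin N) ℝ :=
  Matrix.diagonal (fun i => (Real.sqrt (G.degree i))⁻¹) * G.adjMatrix ℝ
    * Matrix.diagonal (fun i => (Real.sqrt (G.degree i))⁻¹)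

lemma aux_tanh_lip (x y : ℝ) : |Real.tanh x - Real.tanh y| ≤ |x - y| := by
  have h : ∀ z ∈ (Set.univ : Set ℝ), HasDerivWithinAt Real.tanh (1 / Real.cosh z ^ 2) Set.univ z := by
    intro z _
    have h1 := (Real.hasDerivAt_sinh z).div (Real.hasDerivAt_cosh z) (Real.cosh_pos z).ne'
    have h2 : Real.tanh = (Real.sinh / Real.cosh) := by
      funext t; simp [Real.tanh_eq_sinh_div_cosh]
    rw [h2]
    refine HasDerivAt.hasDerivWithinAt ?_
    have h3 : Real.cosh z * Real.cosh z - Real.sinh z * Real.sinh z = 1 := by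
      have := Real.cosh_sq z
      linarith [sq (Real.cosh z), sq (Real.sinh z)]
    rw [h3] at h1
    exact h1
  have := Convex.norm_image_sub_le_of_norm_hasDerivWithin_le (C := 1) h (fun z _ => by
    have h1 := Real.one_le_cosh z
    rw [Real.norm_eq_abs, abs_of_nonneg (by positivity)]
    rw [div_le_one (by positivity)]
    nlinarith) convex_univ (Set.mem_univ y) (Set.mem_univ x)
  simpa using this

lemma aux_specNorm_mulVec {m n : ℕ} (A : Matrix (Fin m) (Fin n) ℝ) (x : Fin n → ℝ) :
    ∑ i, (A.mulVec x i) ^ 2 ≤ specNorm A ^ 2 * ∑ i, x i ^ 2 := by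
  have h := (LinearMap.toContinuousLinearMap (Matrix.toEuclideanLin A)).le_opNorm (WithLp.toLp 2 x)
  have h2 := pow_le_pow_left₀ (norm_nonneg _) h 2
  rw [mul_pow, EuclideanSpace.norm_sq_eq, EuclideanSpace.norm_sq_eq] at h2
  simpa [specNorm, Matrix.toLpLin_apply] using h2

open scoped Matrix.Norms.L2Operator in
lemma aux_specNorm_transpose {m n : ℕ} (A : Matrix (Fin m) (Fin n) ℝ) :
    specNorm A.transpose = specNorm A := by
  have h := Matrix.l2_opNorm_conjTranspose A
  rw [Matrix.conjTranspose_eq_transpose_of_trivial] at h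
  exact h

lemma aux_specRad_nonneg {n : ℕ} (A : Matrix (Fin n) (Fin n) ℝ) (hA : A.IsHermitian) :
    0 ≤ specRad A hA := Real.iSup_nonneg fun _ => abs_nonneg _

lemma aux_specRad_mulVec {n : ℕ} (A : Matrix (Fin n) (Fin n) ℝ) (hA : A.IsHermitian)
    (x : Fin n → ℝ) :
    ∑ i, (A.mulVec x i) ^ 2 ≤ specRad A hA ^ 2 * ∑ i, x i ^ 2 := by
  have key : ∀ i, inner ℝ (hA.eigenvectorBasis i) (WithLp.toLp 2 (A.mulVec x))
      = hA.eigenvalues i * inner ℝ (hA.eigenvectorBasis i) (WithLp.toLp 2 x) := by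
    intro i
    have h1 := hA.mulVec_eigenvectorBasis i
    have hT : A.transpose = A := by
      simpa [Matrix.conjTranspose_eq_transpose_of_trivial] using hA.eq
    rw [EuclideanSpace.inner_eq_star_dotProduct, EuclideanSpace.inner_eq_star_dotProduct]
    simp only [star_trivial]
    rw [dotProduct_comm, Matrix.dotProduct_mulVec, ← Matrix.mulVec_transpose, hT, h1,
      smul_dotProduct, dotProduct_comm, smul_eq_mul]
  have e1 := hA.eigenvectorBasis.sum_sq_norm_inner_right (WithLp.toLp 2 (A.mulVec x))
  have e2 := hA.eigenvectorBasis.sum_sq_norm_inner_right (WithLp.toLp 2 x)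
  rw [EuclideanSpace.norm_sq_eq] at e1 e2
  simp only [Real.norm_eq_abs, sq_abs] at e1 e2
  rw [← e1, ← e2, Finset.mul_sum]
  refine Finset.sum_le_sum fun i _ => ?_
  rw [key, mul_pow]
  refine mul_le_mul_of_nonneg_right ?_ (sq_nonneg _)
  rw [← sq_abs (hA.eigenvalues i)]
  exact pow_le_pow_left₀ (abs_nonneg _)
    (le_ciSup (f := fun i => |hA.eigenvalues i|) (Set.finite_range _).bddAbove i) 2

lemma aux_frob_mul_left {n h : ℕ} (A : Matrix (Fin n) (Fin n) ℝ) (hA : A.IsHermitian)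
    (M : Matrix (Fin n) (Fin h) ℝ) :
    frobNorm (A * M) ≤ specRad A hA * frobNorm M := by
  unfold frobNorm
  rw [← Real.sqrt_sq (aux_specRad_nonneg A hA), ← Real.sqrt_mul (sq_nonneg _)]
  apply Real.sqrt_le_sqrt
  rw [Finset.sum_comm, Finset.sum_comm (f := fun i j => M i j ^ 2), Finset.mul_sum]
  exact Finset.sum_le_sum fun j _ => aux_specRad_mulVec A hA (fun i => M i j)

lemma aux_frob_mul_right {n h : ℕ} (W : Matrix (Fin h) (Fin h) ℝ)
    (M : Matrix (Fin n) (Fin h) ℝ) :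
    frobNorm (M * W) ≤ specNorm W * frobNorm M := by
  unfold frobNorm
  have h0 : 0 ≤ specNorm W := norm_nonneg _
  rw [← Real.sqrt_sq h0, ← Real.sqrt_mul (sq_nonneg _)]
  apply Real.sqrt_le_sqrt
  rw [Finset.mul_sum]
  refine Finset.sum_le_sum fun i _ => ?_
  have := aux_specNorm_mulVec W.transpose (fun j => M i j)
  rw [aux_specNorm_transpose, Matrix.mulVec_transpose] at this
  exact this

lemma aux_normAdj_herm {N : ℕ} (G : SimpleGraph (Fin N)) [DecidableRel G.Adj] :
    (normAdj G).IsHermitian := by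
  unfold Matrix.IsHermitian normAdj
  rw [Matrix.conjTranspose_eq_transpose_of_trivial]
  simp [Matrix.transpose_mul, Matrix.mul_assoc]

lemma aux_eig_le_one {N : ℕ} (G : SimpleGraph (Fin N)) [DecidableRel G.Adj]
    (hdeg : ∀ v, 1 ≤ G.degree v) (l : ℝ) (v : Fin N → ℝ) (hv : v ≠ 0)
    (h : (normAdj G).mulVec v = l • v) : |l| ≤ 1 := by
  obtain ⟨k, hk⟩ := Function.ne_iff.mp hv
  have hd : ∀ i, 0 < Real.sqrt (G.degree i) := fun i =>
    Real.sqrt_pos.mpr (by exact_mod_cast hdeg i)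
  set u : Fin N → ℝ := fun i => (Real.sqrt (G.degree i))⁻¹ * v i with hu
  have hrel : ∀ i, l * (G.degree i * u i) = ∑ j ∈ G.neighborFinset i, u j := by
    intro i
    have h1 := congrFun h i
    unfold normAdj at h1
    rw [← Matrix.mulVec_mulVec, ← Matrix.mulVec_mulVec, Matrix.mulVec_diagonal,
      SimpleGraph.adjMatrix_mulVec_apply] at h1
    simp only [Matrix.mulVec_diagonal, Pi.smul_apply, smul_eq_mul] at h1
    have hdi := (hd i).ne'
    have hs : (G.degree i : ℝ) = Real.sqrt (G.degree i) * Real.sqrt (G.degree i) :=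
      (Real.mul_self_sqrt (by positivity)).symm
    rw [inv_mul_eq_iff_eq_mul₀ hdi] at h1
    simp only [hu]
    rw [h1]
    nth_rewrite 1 [hs]
    field_simp
  haveI : Nonempty (Fin N) := ⟨k⟩
  obtain ⟨i, hi⟩ := Finite.exists_max (fun i => |u i|)
  have hpos : 0 < |u i| := lt_of_lt_of_le
    (abs_pos.mpr (mul_ne_zero (inv_ne_zero (hd k).ne') hk)) (hi k)
  have h2 : |l| * (G.degree i * |u i|) ≤ G.degree i * |u i| := by
    have : |l| * (G.degree i * |u i|) = |l * (G.degree i * u i)| := by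
      rw [abs_mul l, abs_mul (G.degree i : ℝ) (u i), Nat.abs_cast]
    rw [this, hrel]
    refine (Finset.abs_sum_le_sum_abs _ _).trans ?_
    refine (Finset.sum_le_card_nsmul _ _ _ fun j _ => hi j).trans ?_
    simp
  have h3 : 0 < (G.degree i : ℝ) * |u i| :=
    mul_pos (by exact_mod_cast hdeg i) hpos
  exact (mul_le_iff_le_one_left h3).mp h2

lemma aux_specRad_le_one {N : ℕ} (G : SimpleGraph (Fin N)) [DecidableRel G.Adj]
    (hdeg : ∀ v, 1 ≤ G.degree v) (hA : (normAdj G).IsHermitian) :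
    specRad (normAdj G) hA ≤ 1 := by
  refine Real.iSup_le (fun i => ?_) zero_le_one
  refine aux_eig_le_one G hdeg _ (hA.eigenvectorBasis i) ?_ (hA.mulVec_eigenvectorBasis i)
  intro h0
  apply hA.eigenvectorBasis.orthonormal.ne_zero i
  ext j
  exact congrFun h0 j

lemma aux_frob_contr {N F Hd : ℕ} (A : Matrix (Fin N) (Fin N) ℝ) (hA : A.IsHermitian)
    (W : Matrix (Fin Hd) (Fin Hd) ℝ)
    (V : Matrix (Fin F) (Fin Hd) ℝ) (X : Matrix (Fin N) (Fin F) ℝ)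
    (H Z : Matrix (Fin N) (Fin Hd) ℝ) :
    frobNorm (resMap A W V X H - resMap A W V X Z)
      ≤ specRad A hA * specNorm W * frobNorm (H - Z) := by
  have h1 : frobNorm (resMap A W V X H - resMap A W V X Z) ≤ frobNorm (A * ((H - Z) * W)) := by
    unfold frobNorm
    apply Real.sqrt_le_sqrt
    refine Finset.sum_le_sum fun i _ => Finset.sum_le_sum fun j _ => ?_
    apply sq_le_sq.mpr
    refine (aux_tanh_lip _ _).trans (le_of_eq ?_)
    have : A * ((H - Z) * W) = (A * H * W + X * V) - (A * Z * W + X * V) := by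
      rw [← Matrix.mul_assoc, Matrix.mul_sub, Matrix.sub_mul]; abel
    rw [this, Matrix.sub_apply]
  calc _ ≤ _ := h1
    _ ≤ _ := aux_frob_mul_left A hA _
    _ ≤ specRad A hA * (specNorm W * frobNorm (H - Z)) :=
      mul_le_mul_of_nonneg_left (aux_frob_mul_right W _) (aux_specRad_nonneg A hA)
    _ = _ := by ring

open scoped Matrix.Norms.Frobenius in
lemma aux_fixed {m n : ℕ} (f : Matrix (Fin m) (Fin n) ℝ → Matrix (Fin m) (Fin n) ℝ) (K : ℝ)
    (hK0 : 0 ≤ K) (hK : K < 1) (hf : ∀ H Z, frobNorm (f H - f Z) ≤ K * frobNorm (H - Z)) :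
    ∃! M, f M = M := by
  have hn : ∀ M : Matrix (Fin m) (Fin n) ℝ, frobNorm M = ‖M‖ := by
    intro M
    rw [Matrix.frobenius_norm_def, frobNorm, Real.sqrt_eq_rpow]
    simp
  haveI : CompleteSpace (Matrix (Fin m) (Fin n) ℝ) := FiniteDimensional.complete ℝ _
  have hc : ContractingWith ⟨K, hK0⟩ f := by
    refine ⟨hK, LipschitzWith.of_dist_le_mul fun H Z => ?_⟩
    rw [dist_eq_norm, dist_eq_norm, ← hn, ← hn]
    exact hf H Z
  exact ⟨hc.fixedPoint f, hc.fixedPoint_isFixedPt, fun y hy => hc.fixedPoint_unique hy⟩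

/-- If ‖W‖₂ < 1 then the reservoir map on the normalized adjacency matrix is a
contraction with constant K = ρ(Ã)·‖W‖₂ < 1, hence has a unique fixed point. -/
theorem reservoir_normAdj_contraction_uniqueFixedPoint {N F Hd : ℕ}
    (G : SimpleGraph (Fin N)) [DecidableRel G.Adj]
    (hdeg : ∀ v, 1 ≤ G.degree v)
    (W : Matrix (Fin Hd) (Fin Hd) ℝ) (hW : specNorm W < 1)
    (V : Matrix (Fin F) (Fin Hd) ℝ) (X : Matrix (Fin N) (Fin F) ℝ) :
    ∃ hA : (normAdj G).IsHermitian,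
      (∀ H Z : Matrix (Fin N) (Fin Hd) ℝ,
        frobNorm (resMap (normAdj G) W V X H - resMap (normAdj G) W V X Z)
          ≤ specRad (normAdj G) hA * specNorm W * frobNorm (H - Z)) ∧
      specRad (normAdj G) hA * specNorm W < 1 ∧
      ∃! Hstar : Matrix (Fin N) (Fin Hd) ℝ,
        resMap (normAdj G) W V X Hstar = Hstar := by
  have h0 : 0 ≤ specNorm W := norm_nonneg _
  have hlt : specRad (normAdj G) (aux_normAdj_herm G) * specNorm W < 1 :=
    (mul_le_of_le_one_left h0 (aux_specRad_le_one G hdeg _)).trans_lt hW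
  exact ⟨aux_normAdj_herm G, aux_frob_contr _ _ W V X, hlt,
    aux_fixed _ _ (mul_nonneg (aux_specRad_nonneg _ _) h0) hlt (aux_frob_contr _ _ W V X)⟩
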